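/- arXiv:1402.2469 — 2 statements merged into one kernel-verified Lean document; each statement's English description precedes it below -/
import Mathlib

section
/- Let H be the complete s-uniform t-partite hypergraph with sides V_1, …, V_t ordered so that |V_1| ≤ |V_2| ≤ ⋯ ≤ |V_t|, and let I(H) be its edge ideal in R = K[x_v : v ∈ V]. Then the height of I(H) equals |V_1| + |V_2| + ⋯ + |V_{t−s+1}|. -/
open Finset

/-- The vertex set `V = V_1 ∪ ⋯ ∪ V_t` of the multipartite hypergraph with sides `Vs`. -/
def vertexSet {α : Type*} [DecidableEq α] {t : ℕ} (Vs : Fin t → Finset α) : Finset α :=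
  Finset.univ.biUnion Vs

/-- `e` is an edge of the complete `s`-uniform `t`-partite hypergraph with sides `Vs`:
`e ⊆ V`, `|e| = s`, and `|e ∩ V_i| ≤ 1` for every side. -/
def IsEdge {α : Type*} [DecidableEq α] {t : ℕ} (Vs : Fin t → Finset α) (s : ℕ)
    (e : Finset α) : Prop :=
  e ⊆ vertexSet Vs ∧ e.card = s ∧ ∀ i : Fin t, (e ∩ Vs i).card ≤ 1

/-- `F` is an independent set: a subset of `V` containing no edge. -/
def Indep {α : Type*} [DecidableEq α] {t : ℕ} (Vs : Fin t → Finset α) (s : ℕ)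
    (F : Finset α) : Prop :=
  F ⊆ vertexSet Vs ∧ ∀ e : Finset α, IsEdge Vs s e → ¬ e ⊆ F

/-- The edge ideal `I(H) = (∏_{v ∈ e} x_v : e ∈ E(H))` of the complete `s`-uniform
`t`-partite hypergraph, in the polynomial ring `K[x_v : v ∈ α]`. -/
noncomputable def edgeIdeal (K : Type*) [Field K] {α : Type*} [DecidableEq α] {t : ℕ}
    (Vs : Fin t → Finset α) (s : ℕ) : Ideal (MvPolynomial α K) :=
  Ideal.span {m : MvPolynomial α K |
    ∃ e : Finset α, IsEdge Vs s e ∧ m = ∏ v ∈ e, MvPolynomial.X v}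

/-- The height of an ideal: the infimum of the heights (in the prime spectrum, ordered
by inclusion) of the primes minimal over it. -/
noncomputable def idealHeight {R : Type*} [CommRing R] (I : Ideal R) : ℕ∞ :=
  ⨅ (p : PrimeSpectrum R) (_ : p.asIdeal ∈ I.minimalPrimes), Order.height p

/-!
A prime ideal contains `∏ v ∈ e, X v` exactly when it contains one of the variables `X v`, so a
prime contains an edge ideal exactly when its variables form a vertex cover. A prime generated by a
set of variables has height the number of those variables, hence the height of an edge ideal is the
least size of a vertex cover.

In the complete `s`-uniform `t`-partite hypergraph, a set `C` that fails to contain `s` of the sides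
misses a vertex in each of them, and these vertices form an edge avoiding `C`. Conversely, an edge
has at most one vertex in each side, so it cannot avoid more than `t - s` full sides. The minimal
covers are therefore the unions of `t - s + 1` sides, and the smallest one takes the smallest sides.
-/

lemma idealHeight_eq_height {R : Type*} [CommRing R] (I : Ideal R) :
    idealHeight I = I.height := by
  rw [Ideal.height_eq_inf_minimalPrimes]
  apply le_antisymm
  · refine le_iInf₂ fun P hP => ?_
    exact (iInf₂_le (⟨P, hP.isPrime⟩ : PrimeSpectrum R) hP).trans_eq
      (PrimeSpectrum.height_eq_orderHeight _).symm
  · exact le_iInf₂ fun p hp => (iInf₂_le p.asIdeal hp).trans_eq p.height_eq_orderHeight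

section SpanVariables

open MvPolynomial

variable (R : Type*) [CommRing R] (σ : Type*)

lemma ker_constantCoeff_eq_idealOfVars :
    RingHom.ker (constantCoeff : MvPolynomial σ R →+* R) = idealOfVars σ R := by
  ext p
  rw [RingHom.mem_ker, ← pow_one (idealOfVars σ R), mem_pow_idealOfVars_iff']
  simp [constantCoeff_eq, Finsupp.degree_eq_zero_iff]

lemma isPrime_idealOfVars [IsDomain R] : (idealOfVars σ R).IsPrime :=
  ker_constantCoeff_eq_idealOfVars R σ ▸ RingHom.ker_isPrime _

lemma height_idealOfVars_le_card [Nontrivial R] [IsNoetherianRing R] [Finite σ] :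
    (idealOfVars σ R).height ≤ Nat.card σ := by
  have hne : idealOfVars σ R ≠ ⊤ := ker_constantCoeff_eq_idealOfVars R σ ▸ RingHom.ker_ne_top _
  grw [Ideal.height_le_spanFinrank _ hne, idealOfVars,
    Submodule.spanFinrank_span_le_ncard_of_finite (Set.finite_range _),
    Set.ncard_range_of_injective X_injective]

variable {R} in
lemma map_idealOfVars {S : Type*} [CommRing S] (f : R →+* S) :
    (idealOfVars σ R).map (map f) = idealOfVars σ S := by
  simp [Ideal.map_span, ← Set.range_comp, Function.comp_def]

attribute [local instance] algebraMvPolynomial in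
lemma height_idealOfVars_fractionRing [IsDomain R] :
    (idealOfVars σ (FractionRing R)).height = (idealOfVars σ R).height := by
  have hprime := isPrime_idealOfVars R σ
  rw [← map_idealOfVars σ (algebraMap R (FractionRing R))]
  refine IsLocalization.height_map_of_disjoint ((nonZeroDivisors R).map (C (σ := σ)))
    (idealOfVars σ R) (Set.disjoint_left.2 ?_)
  rintro _ ⟨r, hr, rfl⟩ hmem
  rw [SetLike.mem_coe, ← ker_constantCoeff_eq_idealOfVars, RingHom.mem_ker,
    constantCoeff_C] at hmem
  exact nonZeroDivisors.ne_zero hr hmem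

variable {σ}

open scoped Classical in
/-- The isomorphism `R[x_v : v ∈ σ] ≃ R[x_v : v ∉ s][x_v : v ∈ s]`, which turns the ideal generated
by the variables in `s` into the ideal generated by all variables over a larger coefficient ring. -/
noncomputable def splitVars (s : Set σ) :
    MvPolynomial σ R ≃ₐ[R] MvPolynomial s (MvPolynomial ↥sᶜ R) :=
  (renameEquiv R (Equiv.Set.sumCompl s).symm).trans (sumAlgEquiv R s ↥sᶜ)

lemma map_splitVars_span_X_image (s : Set σ) :
    (Ideal.span (X '' s)).map (splitVars R s) = idealOfVars s (MvPolynomial ↥sᶜ R) := by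
  have hX (v : s) : splitVars R s (X v) = X v := by simp [splitVars]
  simp only [Ideal.map_span, Set.image_image, idealOfVars]
  rw [Set.image_eq_range]
  simp only [hX]

lemma isPrime_span_X_image [IsDomain R] (s : Set σ) :
    (Ideal.span (X '' s : Set (MvPolynomial σ R))).IsPrime := by
  have hprime := isPrime_idealOfVars (MvPolynomial ↥sᶜ R) s
  rw [← map_splitVars_span_X_image] at hprime
  rw [← Ideal.comap_map_of_bijective (splitVars R s) (splitVars R s).bijective
    (I := Ideal.span (X '' s))]
  exact Ideal.comap_isPrime _ _

variable {R} in
lemma X_mem_span_X_image [Nontrivial R] {s : Set σ} {v : σ} :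
    (X v : MvPolynomial σ R) ∈ Ideal.span (X '' s) ↔ v ∈ s := by
  classical
  simp [mem_ideal_span_X_image, support_X, Finsupp.single_apply]

-- Passing to the fraction field of the remaining polynomial ring makes the ring Noetherian, so that
-- Krull's height theorem applies even when `σ` is infinite or `R` is not Noetherian.
lemma height_span_X_image_le_encard [IsDomain R] (s : Set σ) :
    (Ideal.span (X '' s : Set (MvPolynomial σ R))).height ≤ s.encard := by
  obtain hs | hs := s.finite_or_infinite
  · have := hs.to_subtype
    calc (Ideal.span (X '' s : Set (MvPolynomial σ R))).height
        = (idealOfVars s (MvPolynomial ↥sᶜ R)).height := by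
          rw [← map_splitVars_span_X_image]
          exact ((splitVars R s).toRingEquiv.height_map _).symm
      _ = (idealOfVars s (FractionRing (MvPolynomial ↥sᶜ R))).height :=
          (height_idealOfVars_fractionRing _ _).symm
      _ ≤ Nat.card s := height_idealOfVars_le_card _ _
      _ = s.encard := by rw [Nat.card_coe_set_eq, hs.cast_ncard_eq]
  · simp [hs.encard_eq]

lemma encard_le_height_span_X_image_of_finite [IsDomain R] {s : Set σ} (hs : s.Finite) :
    s.encard ≤ (Ideal.span (X '' s : Set (MvPolynomial σ R))).height := by
  induction s, hs using Set.Finite.induction_on with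
  | empty => simp
  | @insert v s hv _ ih =>
    have hs := isPrime_span_X_image R s
    have hvs := isPrime_span_X_image R (insert v s)
    have hlt : Ideal.span (X '' s : Set (MvPolynomial σ R)) < Ideal.span (X '' insert v s) := by
      refine SetLike.lt_iff_le_and_exists.2 ⟨Ideal.span_mono (by gcongr; simp), X v, ?_, ?_⟩
      · exact X_mem_span_X_image.2 (Set.mem_insert v s)
      · exact X_mem_span_X_image.not.2 hv
    grw [Set.encard_insert_of_notMem hv, ih]
    exact Ideal.height_add_one_le_of_lt_of_isPrime hlt

theorem height_span_X_image [IsDomain R] (s : Set σ) :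
    (Ideal.span (X '' s : Set (MvPolynomial σ R))).height = s.encard := by
  refine (height_span_X_image_le_encard R s).antisymm
    (ENat.forall_natCast_le_iff_le.1 fun n hn => ?_)
  obtain ⟨u, hus, hu⟩ := Set.exists_subset_encard_eq hn
  grw [← hu, encard_le_height_span_X_image_of_finite R (Set.finite_of_encard_eq_coe hu), hus]

end SpanVariables

section Hypergraph

open MvPolynomial

/-- The edge ideal `(∏_{v ∈ e} x_v : e ∈ E)` of an arbitrary hypergraph with edge set `E`, over an
arbitrary ring of coefficients. -/
noncomputable def hypergraphIdeal (R : Type*) [CommRing R] {σ : Type*} (E : Set (Finset σ)) :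
    Ideal (MvPolynomial σ R) :=
  Ideal.span {m | ∃ e ∈ E, m = ∏ v ∈ e, X v}

/-- `C` is a vertex cover (transversal) of the hypergraph with edge set `E`: it meets every edge.
Covers are sets rather than finsets, because a prime may contain infinitely many variables. -/
def IsVertexCover {σ : Type*} (E : Set (Finset σ)) (C : Set σ) : Prop :=
  ∀ e ∈ E, ∃ v ∈ e, v ∈ C

variable {R σ : Type*} [CommRing R]

lemma hypergraphIdeal_le_iff_isVertexCover {E : Set (Finset σ)} {P : Ideal (MvPolynomial σ R)}
    [hP : P.IsPrime] : hypergraphIdeal R E ≤ P ↔ IsVertexCover E {v | X v ∈ P} := by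
  simp only [hypergraphIdeal, Ideal.span_le, IsVertexCover, Set.mem_ofPred_eq]
  constructor
  · exact fun h e he => hP.prod_mem_iff.1 (h ⟨e, he, rfl⟩)
  · rintro h _ ⟨e, he, rfl⟩
    exact hP.prod_mem_iff.2 (h e he)

variable (R) in
theorem height_hypergraphIdeal [IsDomain R] (E : Set (Finset σ)) :
    (hypergraphIdeal R E).height = ⨅ (C : Set σ) (_ : IsVertexCover E C), C.encard := by
  apply le_antisymm
  · refine le_iInf₂ fun C hC => ?_
    have hprime := isPrime_span_X_image R C
    have hle : hypergraphIdeal R E ≤ Ideal.span (X '' C) := by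
      simpa only [hypergraphIdeal_le_iff_isVertexCover, X_mem_span_X_image, Set.ofPred_mem_eq]
    exact (Ideal.height_mono hle).trans_eq (height_span_X_image R C)
  · rw [Ideal.height_eq_inf_minimalPrimes]
    refine le_iInf₂ fun P hP => ?_
    have hprime := hP.isPrime
    have hspan : Ideal.span (X '' {v : σ | X v ∈ P}) ≤ P :=
      Ideal.span_le.2 (Set.image_subset_iff.2 subset_rfl)
    calc ⨅ (C : Set σ) (_ : IsVertexCover E C), C.encard
        ≤ {v : σ | X v ∈ P}.encard := iInf₂_le _ (hypergraphIdeal_le_iff_isVertexCover.1 hP.le)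
      _ = (Ideal.span (X '' {v : σ | X v ∈ P} : Set (MvPolynomial σ R))).height :=
          (height_span_X_image R _).symm
      _ ≤ P.height := Ideal.height_mono hspan

end Hypergraph

section InitialSums

variable {ι M : Type*} [AddCommMonoid M] [LinearOrder M] {f : ι → M}

lemma sum_le_sum_of_card_le [IsOrderedAddMonoid M] {S T : Finset ι} (hcard : #S ≤ #T)
    (hf : 0 ≤ f) (h : ∀ i ∈ S, ∀ j ∈ T, f i ≤ f j) : ∑ i ∈ S, f i ≤ ∑ j ∈ T, f j := by
  obtain rfl | hS := S.eq_empty_or_nonempty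
  · exact sum_nonneg fun j _ => hf j
  · obtain ⟨m, hmS, hm⟩ := S.exists_max_image f hS
    calc ∑ i ∈ S, f i ≤ #S • f m := sum_le_card_nsmul _ _ _ hm
      _ ≤ #T • f m := nsmul_le_nsmul_left (hf m) hcard
      _ ≤ ∑ j ∈ T, f j := card_nsmul_le_sum _ _ _ (h m hmS)

lemma sum_le_sum_of_isLowerSet [LinearOrder ι] [IsOrderedCancelAddMonoid M]
    (hmono : Monotone f) (hf : 0 ≤ f) {S T : Finset ι} (hS : IsLowerSet (S : Set ι))
    (hcard : #S ≤ #T) : ∑ i ∈ S, f i ≤ ∑ j ∈ T, f j := by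
  rw [← sum_sdiff_le_sum_sdiff]
  refine sum_le_sum_of_card_le (card_sdiff_le_card_sdiff_iff.2 hcard) hf fun i hi j hj => ?_
  rw [mem_sdiff] at hi hj
  exact hmono (le_of_not_ge fun hji => hj.2 (hS hji hi.1))

end InitialSums

section Multipartite

open scoped Function

variable {α : Type*} [DecidableEq α] {t : ℕ} {Vs : Fin t → Finset α}

lemma edgeIdeal_eq_hypergraphIdeal (K : Type*) [Field K] (Vs : Fin t → Finset α) (s : ℕ) :
    edgeIdeal K Vs s = hypergraphIdeal K {e | IsEdge Vs s e} :=
  rfl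

lemma isVertexCover_biUnion {s : ℕ} {A : Finset (Fin t)} (hA : t < s + #A) :
    IsVertexCover {e | IsEdge Vs s e} (A.biUnion Vs : Finset α) := by
  rintro e ⟨heV, hes, he⟩
  by_contra! hdisj
  have hsub : e ⊆ Aᶜ.biUnion fun i => e ∩ Vs i := fun v hv => by
    obtain ⟨i, -, hvi⟩ := mem_biUnion.1 (heV hv)
    have hiA : i ∉ A := fun hi => hdisj v hv (mem_biUnion.2 ⟨i, hi, hvi⟩)
    exact mem_biUnion.2 ⟨i, mem_compl.2 hiA, mem_inter.2 ⟨hv, hvi⟩⟩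
  have hsA : s ≤ #Aᶜ := calc
    s = #e := hes.symm
    _ ≤ #(Aᶜ.biUnion fun i => e ∩ Vs i) := card_le_card hsub
    _ ≤ #Aᶜ * 1 := card_biUnion_le_card_mul _ _ _ fun i _ => he i
    _ = #Aᶜ := mul_one _
  have hcompl : #Aᶜ + #A = t := (card_compl_add_card A).trans (Fintype.card_fin t)
  omega

lemma isEdge_image (hdisj : Pairwise (Disjoint on Vs)) {B : Finset (Fin t)} {g : B → α}
    (hg : ∀ i : B, g i ∈ Vs i) : IsEdge Vs #B (univ.image g) := by
  have hside {v : α} {i j : Fin t} (hi : v ∈ Vs i) (hj : v ∈ Vs j) : i = j :=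
    hdisj.eq fun h => disjoint_left.1 h hi hj
  have hinj : Function.Injective g := fun i j hij => Subtype.ext (hside (hg i) (hij ▸ hg j))
  refine ⟨image_subset_iff.2 fun i _ => mem_biUnion.2 ⟨i, mem_univ _, hg i⟩, ?_, fun i => ?_⟩
  · rw [card_image_of_injective _ hinj, card_univ, Fintype.card_coe]
  · refine card_le_one.2 fun v hv w hw => ?_
    simp only [mem_inter, mem_image, mem_univ, true_and] at hv hw
    obtain ⟨⟨j, rfl⟩, hj⟩ := hv
    obtain ⟨⟨k, rfl⟩, hk⟩ := hw
    rw [Subtype.ext ((hside (hg j) hj).trans (hside (hg k) hk).symm)]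

lemma IsVertexCover.exists_biUnion_subset (hdisj : Pairwise (Disjoint on Vs)) {s : ℕ}
    {C : Set α} (hC : IsVertexCover {e | IsEdge Vs s e} C) :
    ∃ A : Finset (Fin t), t < s + #A ∧ ↑(A.biUnion Vs) ⊆ C := by
  classical
  let A : Finset (Fin t) := {i | ↑(Vs i) ⊆ C}
  refine ⟨A, ?_, by simp [A]⟩
  by_contra! hcard
  obtain ⟨B, hBA, rfl⟩ : ∃ B ⊆ Aᶜ, #B = s :=
    exists_subset_card_eq (by rw [card_compl, Fintype.card_fin]; omega)
  have hmiss (i : B) : ∃ v ∈ Vs i, v ∉ C := by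
    simpa [A, Set.not_subset] using hBA i.2
  choose g hgV hgC using hmiss
  obtain ⟨v, hv, hvC⟩ := hC _ (isEdge_image hdisj hgV)
  obtain ⟨i, -, rfl⟩ := mem_image.1 hv
  exact hgC i hvC

theorem iInf_encard_isVertexCover {s : ℕ} (hs : 0 < s) (hst : s ≤ t)
    (hdisj : Pairwise (Disjoint on Vs)) (hmono : Monotone fun i => #(Vs i)) :
    ⨅ (C : Set α) (_ : IsVertexCover {e | IsEdge Vs s e} C), C.encard =
      (∑ i : Fin t with i.val < t - s + 1, #(Vs i) : ℕ) := by
  set F : Finset (Fin t) := {i | i.val < t - s + 1}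
  have hF : #F = t - s + 1 := by rw [Fin.card_filter_val_lt]; omega
  have hcard (A : Finset (Fin t)) : (A.biUnion Vs : Set α).encard = (∑ i ∈ A, #(Vs i) : ℕ) := by
    rw [Set.encard_coe_eq_coe_finsetCard, card_biUnion fun i _ j _ hij => hdisj hij]
  apply le_antisymm
  · rw [← hcard]
    exact iInf₂_le _ (isVertexCover_biUnion (by omega))
  · refine le_iInf₂ fun C hC => ?_
    obtain ⟨A, hA, hAC⟩ := hC.exists_biUnion_subset hdisj
    have hlower : IsLowerSet (F : Set (Fin t)) := fun i j hji hi => by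
      simp only [F, coe_filter_univ, Set.mem_ofPred_eq] at hi ⊢
      omega
    have hFA : #F ≤ #A := by omega
    grw [← hAC, hcard, sum_le_sum_of_isLowerSet hmono (fun _ => Nat.zero_le _) hlower hFA]

theorem height_edgeIdeal_general (R : Type*) [CommRing R] [IsDomain R] {s : ℕ} (hs : 0 < s)
    (hst : s ≤ t) (hdisj : Pairwise (Disjoint on Vs)) (hmono : Monotone fun i => #(Vs i)) :
    (hypergraphIdeal R {e | IsEdge Vs s e}).height =
      (∑ i : Fin t with i.val < t - s + 1, #(Vs i) : ℕ) := by
  rw [height_hypergraphIdeal, iInf_encard_isVertexCover hs hst hdisj hmono]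

end Multipartite

/-- If the sides are ordered by increasing cardinality, the height of
the edge ideal of the complete `s`-uniform `t`-partite hypergraph equals
`|V_1| + ⋯ + |V_{t-s+1}|` (in `0`-indexed form, the sum of the cardinalities of the
sides with index `< t - s + 1`). -/
theorem height_edgeIdeal
    (K : Type*) [Field K] {α : Type*} [DecidableEq α] [Fintype α] {t s : ℕ}
    (hs : 2 ≤ s) (hst : s ≤ t)
    (Vs : Fin t → Finset α)
    (hdisj : ∀ i j : Fin t, i ≠ j → Disjoint (Vs i) (Vs j))
    (hne : ∀ i : Fin t, (Vs i).Nonempty)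
    (huniv : vertexSet Vs = Finset.univ)
    (hmono : ∀ i j : Fin t, i ≤ j → (Vs i).card ≤ (Vs j).card) :
    idealHeight (edgeIdeal K Vs s) =
      (∑ i ∈ Finset.univ.filter (fun i : Fin t => i.val < t - s + 1), (Vs i).card :
        ℕ) := by
  rw [idealHeight_eq_height, edgeIdeal_eq_hypergraphIdeal]
  exact height_edgeIdeal_general K (by omega) hst (fun i j => hdisj i j) (fun i j => hmono i j)
end

section
/- Let H be the complete s-uniform t-partite hypergraph with sides V_1, …, V_t ordered so that |V_1| ≤ |V_2| ≤ ⋯ ≤ |V_t|, and let I(H) be its edge ideal in R = K[x_v : v ∈ V]. Then the Krull dimension of the quotient ring R/I(H) equals |V_{t−s+2}| + |V_{t−s+3}| + ⋯ + |V_t|. -/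
open Finset

/-!
The Krull dimension of `R[x_v] / I` is the largest Krull dimension of a quotient by a minimal prime
`p` of `I`. If `I` is generated by squarefree monomials, no generator is a product of variables
outside `p`, so these variables form an independent set `F`, and `R[x_v] / p` is a quotient of the
polynomial ring in the variables of `F`; conversely that polynomial ring is a quotient of
`R[x_v] / I` for every independent `F`. So for Noetherian `R` the dimension is `dim R` plus the size
of a largest independent set. In the complete multipartite hypergraph a set of vertices is
independent exactly when it meets fewer than `s` sides, so a largest one is the union of the `s - 1`
largest sides.
-/

theorem ringKrullDim_quotient_eq_iSup_minimalPrimes {R : Type*} [CommRing R] (I : Ideal R) :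
    ringKrullDim (R ⧸ I) = ⨆ p ∈ I.minimalPrimes, ringKrullDim (R ⧸ p) := by
  refine le_antisymm ?_ (iSup₂_le fun p hp ↦ ?_)
  · rw [ringKrullDim_quotient]
    refine iSup_le fun chain ↦ ?_
    obtain ⟨p, hp, hp_head⟩ :=
      Ideal.exists_minimalPrimes_le (I := I) (J := chain.head.1.asIdeal) chain.head.2
    refine le_iSup₂_of_le p hp ?_
    rw [ringKrullDim_quotient]
    exact Order.LTSeries.length_le_krullDim
      { length := chain.length
        toFun := fun i ↦ ⟨(chain i).1, hp_head.trans (chain.head_le i)⟩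
        step := chain.step }
  · exact ringKrullDim_le_of_surjective _ (Ideal.Quotient.factor_surjective hp.1.2)

section SquarefreeMonomialIdeal

open MvPolynomial

variable {R : Type*} [CommRing R] {σ τ : Type*}

theorem ker_killCompl {f : τ → σ} (hf : Function.Injective f) :
    RingHom.ker (killCompl hf : MvPolynomial σ R →ₐ[R] MvPolynomial τ R) =
      Ideal.span (X '' (Set.range f)ᶜ) := by
  refine le_antisymm (fun p hp ↦ ?_) (Ideal.span_le.2 ?_)
  · refine mem_ideal_span_X_image.2 fun m hm ↦ ?_
    by_contra! hm_compl
    have hm_range : (m.support : Set σ) ⊆ Set.range f := fun v hv ↦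
      by_contra fun hvf ↦ Finsupp.mem_support_iff.1 hv (hm_compl v hvf)
    rw [← m.mapDomain_comapDomain f hf hm_range, mem_support_iff, ← coeff_killCompl hf,
      (RingHom.mem_ker).1 hp, coeff_zero] at hm
    exact hm rfl
  · rintro _ ⟨v, hv, rfl⟩
    simp [killCompl, dif_neg hv]

theorem ringKrullDim_quotient_span_X_image_compl [IsNoetherianRing R] (F : Finset σ) :
    ringKrullDim (MvPolynomial σ R ⧸ Ideal.span (X '' (F : Set σ)ᶜ : Set (MvPolynomial σ R))) =
      ringKrullDim R + #F := by
  have hf : Function.Injective (Subtype.val : F → σ) := Subtype.val_injective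
  have hsurj : Function.Surjective (killCompl hf : MvPolynomial σ R →ₐ[R] MvPolynomial F R) :=
    fun p ↦ ⟨rename Subtype.val p, killCompl_rename_app hf p⟩
  have hker := ker_killCompl (R := R) hf
  rw [Subtype.range_coe_subtype, Finset.setOfPred_mem] at hker
  rw [← hker, ringKrullDim_eq_of_ringEquiv
    (Ideal.quotientKerAlgEquivOfSurjective hsurj).toRingEquiv,
    MvPolynomial.ringKrullDim_of_isNoetherianRing, Nat.card_eq_fintype_card, Fintype.card_coe]

variable (R) in
/-- The ideal of `R[x_v : v ∈ σ]` generated by the monomials `∏_{v ∈ e} x_v` for `e ∈ E`: the edge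
ideal over `R` of an arbitrary hypergraph with edge set `E`. -/
noncomputable def squarefreeMonomialIdeal (E : Set (Finset σ)) : Ideal (MvPolynomial σ R) :=
  Ideal.span ((fun e ↦ ∏ v ∈ e, X v) '' E)

theorem squarefreeMonomialIdeal_le_span_X_image {E : Set (Finset σ)} {C : Set σ}
    (hC : ∀ e ∈ E, ∃ v ∈ e, v ∈ C) :
    squarefreeMonomialIdeal R E ≤ Ideal.span (X '' C) := by
  refine Ideal.span_le.2 ?_
  rintro _ ⟨e, he, rfl⟩
  obtain ⟨v, hve, hvC⟩ := hC e he
  exact Ideal.mem_of_dvd _ (Finset.dvd_prod_of_mem X hve)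
    (Ideal.subset_span (Set.mem_image_of_mem X hvC))

theorem exists_X_mem_of_squarefreeMonomialIdeal_le {E : Set (Finset σ)}
    {p : Ideal (MvPolynomial σ R)} [hp : p.IsPrime] (hEp : squarefreeMonomialIdeal R E ≤ p)
    {e : Finset σ} (he : e ∈ E) : ∃ v ∈ e, X v ∈ p :=
  hp.prod_mem_iff.1 (hEp (Ideal.subset_span (Set.mem_image_of_mem _ he)))

theorem ringKrullDim_quotient_squarefreeMonomialIdeal [IsNoetherianRing R] [Finite σ]
    {E : Set (Finset σ)} {n : ℕ} (hn : IsGreatest (card '' {F | ∀ e ∈ E, ¬ e ⊆ F}) n) :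
    ringKrullDim (MvPolynomial σ R ⧸ squarefreeMonomialIdeal R E) = ringKrullDim R + n := by
  classical
  have : Fintype σ := Fintype.ofFinite σ
  refine le_antisymm ?_ ?_
  · rw [ringKrullDim_quotient_eq_iSup_minimalPrimes]
    refine iSup₂_le fun p hp ↦ ?_
    have : p.IsPrime := hp.1.1
    let F : Finset σ := {v | (X v : MvPolynomial σ R) ∉ p}
    have hF : ∀ e ∈ E, ¬ e ⊆ F := fun e he heF ↦
      have ⟨v, hve, hvp⟩ := exists_X_mem_of_squarefreeMonomialIdeal_le hp.1.2 he
      (Finset.mem_filter.1 (heF hve)).2 hvp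
    have hFp : Ideal.span (X '' (F : Set σ)ᶜ) ≤ p := by
      refine Ideal.span_le.2 ?_
      rintro _ ⟨v, hv, rfl⟩
      simpa [F] using hv
    calc ringKrullDim (MvPolynomial σ R ⧸ p)
        ≤ ringKrullDim (MvPolynomial σ R ⧸
            Ideal.span (X '' (F : Set σ)ᶜ : Set (MvPolynomial σ R))) :=
          ringKrullDim_le_of_surjective _ (Ideal.Quotient.factor_surjective hFp)
      _ = ringKrullDim R + #F := ringKrullDim_quotient_span_X_image_compl F
      _ ≤ ringKrullDim R + n := by
          gcongr
          exact hn.2 (Set.mem_image_of_mem card hF)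
  · obtain ⟨F, hF, rfl⟩ := hn.1
    rw [← ringKrullDim_quotient_span_X_image_compl F]
    exact ringKrullDim_le_of_surjective _ <| Ideal.Quotient.factor_surjective <|
      squarefreeMonomialIdeal_le_span_X_image fun e he ↦ Finset.not_subset.1 (hF e he)

end SquarefreeMonomialIdeal

theorem sum_le_sum_of_isUpperSet_of_card_le {ι M : Type*} [LinearOrder ι] [AddCommMonoid M]
    [PartialOrder M] [IsOrderedCancelAddMonoid M] {c : ι → M} (hc : Monotone c) (hc₀ : 0 ≤ c)
    {S T : Finset ι} (hT : IsUpperSet (T : Set ι)) (hST : #S ≤ #T) :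
    ∑ i ∈ S, c i ≤ ∑ i ∈ T, c i := by
  rw [← sum_sdiff_le_sum_sdiff]
  have hcard : #(S \ T) ≤ #(T \ S) := card_sdiff_le_card_sdiff_iff.2 hST
  obtain hTS | hTS := (T \ S).eq_empty_or_nonempty
  · rw [hTS, card_empty, Nat.le_zero, card_eq_zero] at hcard
    rw [hTS, hcard]
  · let k := (T \ S).min' hTS
    have hkT : k ∈ T := (mem_sdiff.1 (min'_mem _ hTS)).1
    have hle : ∀ i ∈ S \ T, i ≤ k := fun i hi ↦
      le_of_not_ge fun hki ↦ (mem_sdiff.1 hi).2 (hT hki hkT)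
    calc ∑ i ∈ S \ T, c i
        ≤ #(S \ T) • c k := sum_le_card_nsmul _ _ _ fun i hi ↦ hc (hle i hi)
      _ ≤ #(T \ S) • c k := nsmul_le_nsmul_left (hc₀ k) hcard
      _ ≤ ∑ i ∈ T \ S, c i := card_nsmul_le_sum _ _ _ fun i hi ↦ hc (min'_le _ i hi)

theorem eq_of_mem_of_mem {ι α : Type*} {A : ι → Finset α}
    (hdisj : Pairwise (Function.onFun Disjoint A)) {v : α} {i j : ι} (hi : v ∈ A i)
    (hj : v ∈ A j) : i = j :=
  hdisj.eq (not_disjoint_iff.2 ⟨v, hi, hj⟩)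

theorem card_filter_le_val (n m : ℕ) : #{i : Fin n | m ≤ i.val} = n - m := by
  have hcompl : #{i : Fin n | i.val < m} + #{i : Fin n | ¬ i.val < m} = n := by
    rw [card_filter_add_card_filter_not, card_univ, Fintype.card_fin]
  simp only [Fin.card_filter_val_lt, not_lt] at hcompl
  omega

section Multipartite

variable {α : Type*} [DecidableEq α] {t s : ℕ} {Vs : Fin t → Finset α}

/-- The indices of the sides `V_i` that the vertex set `F` meets. -/
def metSides (Vs : Fin t → Finset α) (F : Finset α) : Finset (Fin t) :=
  {i | (F ∩ Vs i).Nonempty}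

theorem mem_metSides {F : Finset α} {i : Fin t} : i ∈ metSides Vs F ↔ ∃ v ∈ F, v ∈ Vs i := by
  simp [metSides, Finset.Nonempty]

theorem subset_biUnion_metSides {F : Finset α} (hF : F ⊆ vertexSet Vs) :
    F ⊆ (metSides Vs F).biUnion Vs := fun v hv ↦
  have ⟨i, _, hvi⟩ := mem_biUnion.1 (hF hv)
  mem_biUnion.2 ⟨i, mem_metSides.2 ⟨v, hv, hvi⟩, hvi⟩

theorem metSides_biUnion_subset (hdisj : Pairwise (Function.onFun Disjoint Vs))
    (T : Finset (Fin t)) : metSides Vs (T.biUnion Vs) ⊆ T := by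
  intro i hi
  obtain ⟨v, hvT, hvi⟩ := mem_metSides.1 hi
  obtain ⟨j, hjT, hvj⟩ := mem_biUnion.1 hvT
  rwa [eq_of_mem_of_mem hdisj hvi hvj]

theorem le_card_metSides_of_isEdge {e F : Finset α} (he : IsEdge Vs s e) (heF : e ⊆ F) :
    s ≤ #(metSides Vs F) := by
  have he_cover : e ⊆ (metSides Vs F).biUnion fun i ↦ e ∩ Vs i := by
    intro v hv
    obtain ⟨i, _, hvi⟩ := mem_biUnion.1 (he.1 hv)
    have hiF : i ∈ metSides Vs F := mem_metSides.2 ⟨v, heF hv, hvi⟩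
    exact mem_biUnion.2 ⟨i, hiF, mem_inter.2 ⟨hv, hvi⟩⟩
  calc s = #e := he.2.1.symm
    _ ≤ #((metSides Vs F).biUnion fun i ↦ e ∩ Vs i) := card_le_card he_cover
    _ ≤ #(metSides Vs F) * 1 := card_biUnion_le_card_mul _ _ _ fun i _ ↦ he.2.2 i
    _ = #(metSides Vs F) := mul_one _

theorem exists_isEdge_subset (hdisj : Pairwise (Function.onFun Disjoint Vs)) {F : Finset α}
    (hF : s ≤ #(metSides Vs F)) : ∃ e ⊆ F, IsEdge Vs s e := by
  obtain ⟨S, hSF, hS⟩ := exists_subset_card_eq hF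
  have hmeet : ∀ i : S, ∃ v ∈ F, v ∈ Vs i := fun i ↦ mem_metSides.1 (hSF i.2)
  choose f hfF hfV using hmeet
  have hf : Function.Injective f := fun i j hij ↦
    Subtype.ext (eq_of_mem_of_mem hdisj (hfV i) (hij ▸ hfV j))
  refine ⟨univ.image f, image_subset_iff.2 fun i _ ↦ hfF i,
    image_subset_iff.2 fun i _ ↦ mem_biUnion.2 ⟨i, mem_univ _, hfV i⟩, ?_, fun j ↦ ?_⟩
  · rw [card_image_of_injective _ hf, card_univ, Fintype.card_coe, hS]
  · refine card_le_one.2 fun v hv w hw ↦ ?_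
    simp only [mem_inter, mem_image, mem_univ, true_and] at hv hw
    obtain ⟨⟨⟨i, rfl⟩, hij⟩, ⟨i', rfl⟩, hij'⟩ := hv, hw
    have hi : i.1 = j := eq_of_mem_of_mem hdisj (hfV i) hij
    have hi' : i'.1 = j := eq_of_mem_of_mem hdisj (hfV i') hij'
    rw [Subtype.ext (hi.trans hi'.symm)]

theorem indep_iff_card_metSides_lt (hdisj : Pairwise (Function.onFun Disjoint Vs))
    {F : Finset α} : Indep Vs s F ↔ F ⊆ vertexSet Vs ∧ #(metSides Vs F) < s := by
  refine and_congr_right fun _ ↦ ⟨fun hF ↦ ?_, fun hF e he heF ↦ ?_⟩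
  · by_contra! hs
    obtain ⟨e, heF, he⟩ := exists_isEdge_subset hdisj hs
    exact hF e he heF
  · exact hF.not_ge (le_card_metSides_of_isEdge he heF)

theorem isGreatest_card_indep (hdisj : Pairwise (Function.onFun Disjoint Vs))
    (hmono : Monotone fun i ↦ #(Vs i)) {T : Finset (Fin t)} (hT : IsUpperSet (T : Set (Fin t)))
    (hTs : #T + 1 = s) :
    IsGreatest (card '' {F | Indep Vs s F}) (∑ i ∈ T, #(Vs i)) := by
  refine ⟨⟨T.biUnion Vs, ?_, card_biUnion fun i _ j _ hij ↦ hdisj hij⟩, ?_⟩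
  · have hmet : #(metSides Vs (T.biUnion Vs)) ≤ #T :=
      card_le_card (metSides_biUnion_subset hdisj T)
    exact (indep_iff_card_metSides_lt hdisj).2
      ⟨biUnion_subset_biUnion_of_subset_left Vs (subset_univ T), by omega⟩
  · rintro _ ⟨F, hF, rfl⟩
    obtain ⟨hFV, hFs⟩ := (indep_iff_card_metSides_lt hdisj).1 hF
    calc #F ≤ #((metSides Vs F).biUnion Vs) := card_le_card (subset_biUnion_metSides hFV)
      _ ≤ ∑ i ∈ metSides Vs F, #(Vs i) := card_biUnion_le
      _ ≤ ∑ i ∈ T, #(Vs i) :=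
          sum_le_sum_of_isUpperSet_of_card_le hmono (fun _ ↦ Nat.zero_le _) hT (by omega)

theorem edgeIdeal_eq_squarefreeMonomialIdeal (K : Type*) [Field K] :
    edgeIdeal K Vs s = squarefreeMonomialIdeal K {e | IsEdge Vs s e} := by
  simp only [edgeIdeal, squarefreeMonomialIdeal, Set.image, Set.mem_ofPred_eq, eq_comm]

end Multipartite

theorem krullDim_quotient_edgeIdeal_general
    (R : Type*) [CommRing R] [IsNoetherianRing R] {α : Type*} [DecidableEq α] [Fintype α]
    {t s : ℕ} (hs : 1 ≤ s) (hst : s ≤ t) (Vs : Fin t → Finset α)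
    (hdisj : Pairwise (Function.onFun Disjoint Vs)) (huniv : vertexSet Vs = Finset.univ)
    (hmono : Monotone fun i ↦ #(Vs i)) :
    ringKrullDim (MvPolynomial α R ⧸ squarefreeMonomialIdeal R {e | IsEdge Vs s e}) =
      ringKrullDim R + (∑ i with t - s + 1 ≤ i.val, #(Vs i) : ℕ) := by
  have hupper : IsUpperSet (({i | t - s + 1 ≤ i.val} : Finset (Fin t)) : Set (Fin t)) := by
    intro i j hij hi
    simp only [coe_filter, mem_univ, true_and, Set.mem_ofPred_eq] at hi ⊢
    exact hi.trans hij
  have hcard : #{i : Fin t | t - s + 1 ≤ i.val} + 1 = s := by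
    rw [card_filter_le_val]
    omega
  have hgreatest := isGreatest_card_indep hdisj hmono hupper hcard
  simp only [Indep, huniv, subset_univ, true_and] at hgreatest
  exact ringKrullDim_quotient_squarefreeMonomialIdeal hgreatest

/-- If the sides are ordered by increasing cardinality, the Krull
dimension of `R/I(H)` for the complete `s`-uniform `t`-partite hypergraph `H` equals
`|V_{t-s+2}| + ⋯ + |V_t|` (in `0`-indexed form, the sum of the cardinalities of the
sides with index `≥ t - s + 1`). -/
theorem krullDim_quotient_edgeIdeal
    (K : Type*) [Field K] {α : Type*} [DecidableEq α] [Fintype α] {t s : ℕ}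
    (hs : 2 ≤ s) (hst : s ≤ t)
    (Vs : Fin t → Finset α)
    (hdisj : ∀ i j : Fin t, i ≠ j → Disjoint (Vs i) (Vs j))
    (hne : ∀ i : Fin t, (Vs i).Nonempty)
    (huniv : vertexSet Vs = Finset.univ)
    (hmono : ∀ i j : Fin t, i ≤ j → (Vs i).card ≤ (Vs j).card) :
    ringKrullDim (MvPolynomial α K ⧸ edgeIdeal K Vs s) =
      (∑ i ∈ Finset.univ.filter (fun i : Fin t => t - s + 1 ≤ i.val), (Vs i).card :
        ℕ) := by
  rw [edgeIdeal_eq_squarefreeMonomialIdeal, krullDim_quotient_edgeIdeal_general K (by omega) hst Vs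
    (fun i j ↦ hdisj i j) huniv (fun i j ↦ hmono i j), ringKrullDim_eq_zero_of_field, zero_add]
end
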